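/- Let n ≥ 1 and let a : ℤ → ℂ be any function (only the values a_m for |m| ≤ n−1 matter). Let M be the n×n complex matrix with entries M_{jl} = (|j−l|/n)·a_{j−l} and let N be the n×n matrix with entries N_{jl} = (j−l)·a_{j−l}, for 0 ≤ j,l ≤ n−1. Then, with ‖·‖ the operator norm on ℓ², ‖M‖ ≤ γ′_n · ‖N‖, where γ′_n = (2/n)·(1 + (1 + log n)/π). In particular γ′_n → 0 as n → ∞. -/

import Mathlib

open Filter

/-- The operator norm of an `n×n` complex matrix acting on `ℓ²`. -/
noncomputable def l2OpNorm {n : ℕ} (M : Matrix (Fin n) (Fin n) ℂ) : ℝ :=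
  ‖Matrix.toEuclideanCLM (𝕜 := ℂ) M‖

/-- odd roots: `exp(i π (2p+1)/n)` -/
noncomputable def zt (n p : ℕ) : ℂ :=
  Complex.exp (((2 * ((2 * p + 1) * Real.pi / (2 * n)) : ℝ) : ℂ) * Complex.I)

/-- coefficients -/
noncomputable def cf (n p : ℕ) : ℂ :=
  (1 / (n : ℂ)) * ∑ r ∈ Finset.range (n - 1), ((zt n p)⁻¹) ^ (r + 1)

lemma zt_ne (n p : ℕ) : zt n p ≠ 0 := Complex.exp_ne_zero _

lemma zt_norm (n p : ℕ) : ‖zt n p‖ = 1 := Complex.norm_exp_ofReal_mul_I _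

lemma zt_pow_n (n p : ℕ) (hn : 1 ≤ n) : zt n p ^ n = -1 := by
  have h0 : (n : ℂ) ≠ 0 := by exact_mod_cast (by omega : n ≠ 0)
  unfold zt
  rw [← Complex.exp_nat_mul]
  have : (n : ℂ) * (((2 * ((2 * p + 1) * Real.pi / (2 * n)) : ℝ) : ℂ) * Complex.I)
      = Real.pi * Complex.I + (p : ℕ) * (2 * Real.pi * Complex.I) := by
    push_cast; field_simp; ring
  rw [this, Complex.exp_add, Complex.exp_nat_mul_two_pi_mul_I, Complex.exp_pi_mul_I]
  ring

lemma zt_succ (n p : ℕ) :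
    zt n p = zt n 0 * (Complex.exp (2 * Real.pi * Complex.I / n)) ^ p := by
  unfold zt
  rw [← Complex.exp_nat_mul, ← Complex.exp_add]
  congr 1
  by_cases h0 : (n : ℂ) = 0
  · simp [h0]
  push_cast; field_simp; ring

lemma sum_zt (n : ℕ) (hn : 1 ≤ n) (s : ℤ) (hs : ¬ (n : ℤ) ∣ s) :
    ∑ p ∈ Finset.range n, zt n p ^ s = 0 := by
  set w := Complex.exp (2 * Real.pi * Complex.I / n) with hw
  have hp : IsPrimitiveRoot w n := Complex.isPrimitiveRoot_exp n (by omega)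
  have h1 : w ^ s ≠ 1 := fun h => hs ((hp.zpow_eq_one_iff_dvd s).1 h)
  have : ∀ p ∈ Finset.range n, zt n p ^ s = zt n 0 ^ s * (w ^ s) ^ p := by
    intro p _
    rw [zt_succ, mul_zpow, ← hw, ← zpow_natCast, ← zpow_natCast, zpow_comm]
  rw [Finset.sum_congr rfl this, ← Finset.mul_sum, geom_sum_eq h1]
  have : (w ^ s) ^ n = 1 := by
    rw [← zpow_natCast, zpow_comm, zpow_natCast, hp.pow_eq_one, one_zpow]
  simp [this]

lemma repr_pos (n : ℕ) (m : ℕ) (h1 : 1 ≤ m) (h2 : m < n) :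
    ∑ p ∈ Finset.range n, cf n p * zt n p ^ (m : ℤ) = 1 := by
  have hn0 : (n : ℂ) ≠ 0 := by exact_mod_cast (by omega : n ≠ 0)
  have : ∀ p ∈ Finset.range n, cf n p * zt n p ^ (m : ℤ)
      = (1 / (n : ℂ)) * ∑ r ∈ Finset.range (n - 1), zt n p ^ ((m : ℤ) - (r + 1 : ℕ)) := by
    intro p _
    unfold cf
    rw [mul_assoc, Finset.sum_mul]
    congr 1
    refine Finset.sum_congr rfl fun r _ => ?_
    rw [zpow_sub₀ (zt_ne n p), zpow_natCast _ (r + 1), inv_pow, div_eq_mul_inv, mul_comm]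
  rw [Finset.sum_congr rfl this, ← Finset.mul_sum, Finset.sum_comm,
    Finset.sum_eq_single (m - 1)]
  · have : (m : ℤ) - ((m - 1 + 1 : ℕ) : ℤ) = 0 := by omega
    rw [this]
    simp [hn0]
  · intro r hr hrm
    rw [Finset.mem_range] at hr
    apply sum_zt n (by omega)
    intro hd
    have := Int.eq_zero_of_abs_lt_dvd hd (by rw [abs_lt]; constructor <;> omega)
    omega
  · intro h
    exact absurd (Finset.mem_range.2 (by omega)) h

lemma repr_sign (n : ℕ) (d : ℤ) (h : |d| < n) :
    (∑ p ∈ Finset.range n, cf n p * zt n p ^ d) * (d : ℂ) = ((|d| : ℤ) : ℂ) := by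
  rcases lt_trichotomy d 0 with hd | hd | hd
  · rw [abs_of_neg hd] at h ⊢
    obtain ⟨m, hm⟩ : ∃ m : ℕ, d + n = m := ⟨(d + n).toNat, by omega⟩
    have hd' : d = (m : ℤ) - n := by omega
    have e : ∀ p ∈ Finset.range n, cf n p * zt n p ^ d = -(cf n p * zt n p ^ (m : ℤ)) := by
      intro p _
      rw [hd', zpow_sub₀ (zt_ne n p), zpow_natCast _ n, zt_pow_n n p (by omega)]
      ring
    rw [Finset.sum_congr rfl e, Finset.sum_neg_distrib, repr_pos n m (by omega) (by omega)]
    push_cast; ring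
  · subst hd; simp
  · rw [abs_of_pos hd] at h ⊢
    obtain ⟨m, rfl⟩ : ∃ m : ℕ, d = m := ⟨d.toNat, by omega⟩
    rw [repr_pos n m (by omega) (by omega)]
    simp

lemma cf_norm (n p : ℕ) (hn : 1 ≤ n) (hp : p < n) :
    ‖cf n p‖ = (1 / (n : ℝ)) * (|Real.cos ((2 * p + 1) * Real.pi / (2 * n))| /
      |Real.sin ((2 * p + 1) * Real.pi / (2 * n))|) := by
  set x : ℝ := (2 * p + 1) * Real.pi / (2 * n) with hx
  have hn0 : (0 : ℝ) < n := by exact_mod_cast hn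
  have hx0 : 0 < x := by have := Real.pi_pos; positivity
  have hx1 : x < Real.pi := by
    rw [hx, div_lt_iff₀ (by positivity)]
    have : ((2 * p + 1 : ℕ) : ℝ) < ((2 * n : ℕ) : ℝ) := by exact_mod_cast (by omega)
    push_cast at this
    nlinarith [Real.pi_pos]
  have hs : 0 < Real.sin x := Real.sin_pos_of_pos_of_lt_pi hx0 hx1
  set u := Complex.exp ((x : ℂ) * Complex.I) with hu
  have hun : ‖u‖ = 1 := Complex.norm_exp_ofReal_mul_I _
  have hu0 : u ≠ 0 := Complex.exp_ne_zero _
  have hz : zt n p = u ^ 2 := by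
    unfold zt
    rw [hu, ← Complex.exp_nat_mul, ← hx]
    congr 1; push_cast; ring
  have hinv : u⁻¹ = Complex.exp (-(x : ℂ) * Complex.I) := by
    rw [hu, ← Complex.exp_neg]; congr 1; ring
  have hcos : u + u⁻¹ = 2 * (Real.cos x : ℂ) := by
    rw [hinv, Complex.ofReal_cos, Complex.two_cos]
  have hsin : u - u⁻¹ = 2 * (Real.sin x : ℂ) * Complex.I := by
    rw [hinv, hu, Complex.exp_mul_I, Complex.exp_mul_I, Complex.cos_neg, Complex.sin_neg,
      Complex.ofReal_sin]
    ring
  have key : (∑ r ∈ Finset.range (n - 1), ((zt n p)⁻¹) ^ (r + 1)) * (u - u⁻¹) = u + u⁻¹ := by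
    have g := geom_sum_mul ((zt n p)⁻¹) (n - 1)
    have e : (∑ r ∈ Finset.range (n - 1), ((zt n p)⁻¹) ^ (r + 1))
       = (∑ r ∈ Finset.range (n - 1), ((zt n p)⁻¹) ^ r) * (zt n p)⁻¹ := by
      rw [Finset.sum_mul]; rfl
    have q : ((zt n p)⁻¹) ^ (n - 1) = - zt n p := by
      have h1 : ((zt n p)⁻¹) ^ (n - 1) * (zt n p)⁻¹ = -1 := by
        rw [← pow_succ, Nat.sub_add_cancel hn, inv_pow, zt_pow_n n p hn]; norm_num
      have h2 := zt_ne n p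
      field_simp at h1
      rw [← h1]
      simp
    rw [q] at g
    rw [e]
    rw [hz] at g ⊢
    have : (∑ r ∈ Finset.range (n - 1), ((u ^ 2)⁻¹) ^ r) * (u ^ 2)⁻¹ * (u - u⁻¹)
      = -((∑ r ∈ Finset.range (n - 1), ((u ^ 2)⁻¹) ^ r) * ((u ^ 2)⁻¹ - 1)) * u⁻¹ := by
      field_simp
      ring
    rw [this, g]
    field_simp
    ring
  have kn := congrArg norm key
  rw [hcos, hsin] at kn
  simp only [norm_mul, Complex.norm_real, Complex.norm_I, Real.norm_eq_abs, mul_one,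
    Complex.norm_ofNat] at kn
  unfold cf
  have habs : |Real.sin x| ≠ 0 := by rw [abs_of_pos hs]; exact hs.ne'
  rw [norm_mul]
  congr 1
  · simp
  · rw [eq_div_iff habs]; linarith

lemma cot_le (x : ℝ) (h0 : 0 < x) (h1 : x ≤ Real.pi / 2) :
    |Real.cos x| / |Real.sin x| ≤ 1 / x := by
  have hs : 0 < Real.sin x := Real.sin_pos_of_pos_of_lt_pi h0 (by linarith [Real.pi_pos])
  have hc : 0 ≤ Real.cos x := Real.cos_nonneg_of_neg_pi_div_two_le_of_le (by linarith) h1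
  rw [abs_of_nonneg hc, abs_of_pos hs, div_le_div_iff₀ hs h0]
  rcases h1.lt_or_eq with h | h
  · have ht := Real.lt_tan h0 h
    have hc' : 0 < Real.cos x := Real.cos_pos_of_mem_Ioo ⟨by linarith, h⟩
    rw [Real.tan_eq_sin_div_cos, lt_div_iff₀ hc'] at ht
    linarith
  · rw [h]; simp

lemma odd_sum (m : ℕ) :
    ∑ p ∈ Finset.range (m + 1), 1 / (2 * (p : ℝ) + 1) ≤ 1 + Real.log (2 * m + 1) / 2 := by
  induction m with
  | zero => simp
  | succ m ih =>
    rw [Finset.sum_range_succ]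
    have h1 : (0 : ℝ) < 2 * m + 1 := by positivity
    have h3 : (0 : ℝ) < 2 * m + 3 := by positivity
    have h := Real.log_le_sub_one_of_pos (div_pos h1 h3)
    rw [Real.log_div h1.ne' h3.ne'] at h
    have e : (2 * (m : ℝ) + 1) / (2 * m + 3) - 1 = -(2 * (1 / (2 * m + 3))) := by
      field_simp; ring
    rw [e] at h
    push_cast
    have e1 : 2 * ((m : ℝ) + 1) + 1 = 2 * m + 3 := by ring
    rw [e1]
    linarith

lemma cf_sum (n : ℕ) (hn : 1 ≤ n) :
    ∑ p ∈ Finset.range n, ‖cf n p‖ ≤ (4 / Real.pi) * (1 + Real.log n / 2) := by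
  have hn0 : (0 : ℝ) < n := by exact_mod_cast hn
  have hpi := Real.pi_pos
  have small : ∀ p : ℕ, 2 * p + 1 ≤ n →
      ‖cf n p‖ ≤ (2 / Real.pi) * (1 / (2 * (p : ℝ) + 1)) := by
    intro p hp
    rw [cf_norm n p hn (by omega)]
    have := cot_le ((2 * p + 1) * Real.pi / (2 * n)) (by positivity) (by
      rw [div_le_div_iff₀ (by positivity) (by positivity)]
      have : ((2 * p + 1 : ℕ) : ℝ) ≤ (n : ℝ) := by exact_mod_cast hp
      push_cast at this
      nlinarith)
    calc _ ≤ (1 / (n : ℝ)) * (1 / ((2 * p + 1) * Real.pi / (2 * n))) := by gcongr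
      _ = _ := by field_simp
  have refl : ∀ p : ℕ, p < n → ‖cf n (n - 1 - p)‖ = ‖cf n p‖ := by
    intro p hp
    rw [cf_norm n p hn hp, cf_norm n _ hn (by omega)]
    have : (2 * ((n - 1 - p : ℕ) : ℝ) + 1) * Real.pi / (2 * n)
        = Real.pi - (2 * p + 1) * Real.pi / (2 * n) := by
      rw [Nat.sub_sub, Nat.cast_sub (by omega)]
      push_cast; field_simp; ring
    rw [this, Real.cos_pi_sub, Real.sin_pi_sub, abs_neg]
  set m := (n - 1) / 2 with hm
  have hle : ∑ p ∈ Finset.range n, ‖cf n p‖ ≤ 2 * ∑ p ∈ Finset.range (m + 1), ‖cf n p‖ := by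
    have h1 : ∑ p ∈ Finset.range n, ‖cf n p‖ =
        ∑ p ∈ Finset.range (m + 1), ‖cf n p‖ +
        ∑ p ∈ Finset.range (n - (m + 1)), ‖cf n (m + 1 + p)‖ := by
      rw [← Finset.sum_range_add]
      congr 2; omega
    have h2 : ∑ p ∈ Finset.range (n - (m + 1)), ‖cf n (m + 1 + p)‖
        = ∑ p ∈ Finset.range (n - (m + 1)), ‖cf n p‖ := by
      rw [← Finset.sum_range_reflect]
      refine Finset.sum_congr rfl fun p hp => ?_
      rw [Finset.mem_range] at hp
      rw [← refl p (by omega)]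
      congr 2; omega
    have h3 : ∑ p ∈ Finset.range (n - (m + 1)), ‖cf n p‖
        ≤ ∑ p ∈ Finset.range (m + 1), ‖cf n p‖ := by
      apply Finset.sum_le_sum_of_subset_of_nonneg
      · apply Finset.range_mono; omega
      · intros; positivity
    linarith
  have h4 : ∑ p ∈ Finset.range (m + 1), ‖cf n p‖
      ≤ (2 / Real.pi) * ∑ p ∈ Finset.range (m + 1), 1 / (2 * (p : ℝ) + 1) := by
    rw [Finset.mul_sum]
    refine Finset.sum_le_sum fun p hp => small p ?_
    rw [Finset.mem_range] at hp
    omega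
  have h5 : Real.log (2 * m + 1) ≤ Real.log n := by
    apply Real.log_le_log (by positivity)
    exact_mod_cast (by omega : 2 * m + 1 ≤ n)
  have h6 := odd_sum m
  calc _ ≤ 2 * ((2 / Real.pi) * ∑ p ∈ Finset.range (m + 1), 1 / (2 * (p : ℝ) + 1)) := by linarith
    _ ≤ 2 * ((2 / Real.pi) * (1 + Real.log n / 2)) := by
      gcongr; linarith
    _ = _ := by ring

open scoped Matrix.Norms.L2Operator in
lemma l2OpNorm_eq {n : ℕ} (M : Matrix (Fin n) (Fin n) ℂ) : l2OpNorm M = ‖M‖ := rfl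

open scoped Matrix.Norms.L2Operator in
lemma conj_norm {n : ℕ} (N : Matrix (Fin n) (Fin n) ℂ) (v w : Fin n → ℂ)
    (hv : ∀ i, ‖v i‖ ≤ 1) (hw : ∀ i, ‖w i‖ ≤ 1) :
    ‖Matrix.diagonal v * N * Matrix.diagonal w‖ ≤ ‖N‖ := by
  have h1 : ‖(Matrix.diagonal v : Matrix (Fin n) (Fin n) ℂ)‖ ≤ 1 := by
    rw [Matrix.l2_opNorm_diagonal]; exact (pi_norm_le_iff_of_nonneg zero_le_one).2 hv
  have h2 : ‖(Matrix.diagonal w : Matrix (Fin n) (Fin n) ℂ)‖ ≤ 1 := by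
    rw [Matrix.l2_opNorm_diagonal]; exact (pi_norm_le_iff_of_nonneg zero_le_one).2 hw
  calc _ ≤ ‖(Matrix.diagonal v : Matrix (Fin n) (Fin n) ℂ)‖ * ‖N‖ *
        ‖(Matrix.diagonal w : Matrix (Fin n) (Fin n) ℂ)‖ :=
        (norm_mul_le _ _).trans (mul_le_mul_of_nonneg_right (norm_mul_le _ _) (norm_nonneg _))
    _ ≤ 1 * ‖N‖ * 1 := by gcongr
    _ = ‖N‖ := by ring

lemma gamma_tendsto :
    Tendsto (fun m : ℕ => (2 / (m : ℝ)) * (1 + (1 + Real.log m) / Real.pi))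
      atTop (nhds 0) := by
  have h1 : Tendsto (fun m : ℕ => Real.log m / (m : ℝ)) atTop (nhds 0) := by
    have := (Real.tendsto_pow_log_div_mul_add_atTop 1 0 1 one_ne_zero).comp
      (tendsto_natCast_atTop_atTop (R := ℝ))
    simpa [Function.comp_def] using this
  have h2 : Tendsto (fun m : ℕ => 1 / (m : ℝ)) atTop (nhds 0) :=
    tendsto_one_div_atTop_nhds_zero_nat
  have h3 := (h2.mul_const (2 * (1 + 1 / Real.pi))).add (h1.mul_const (2 / Real.pi))
  simp only [zero_mul, add_zero] at h3
  refine h3.congr fun m => ?_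
  ring

open scoped Matrix.Norms.L2Operator in
theorem schur_aux (n : ℕ) (hn : 1 ≤ n) (a : ℤ → ℂ) :
    (l2OpNorm (Matrix.of fun j l : Fin n =>
        ((|(((j : ℕ) : ℤ) - ((l : ℕ) : ℤ))| : ℤ) : ℂ) / (n : ℂ)
          * a (((j : ℕ) : ℤ) - ((l : ℕ) : ℤ)))
      ≤ (2 / (n : ℝ)) * (1 + (1 + Real.log n) / Real.pi)
        * l2OpNorm (Matrix.of fun j l : Fin n =>
            (((((j : ℕ) : ℤ) - ((l : ℕ) : ℤ)) : ℤ) : ℂ)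
              * a (((j : ℕ) : ℤ) - ((l : ℕ) : ℤ)))) ∧
    Tendsto (fun m : ℕ => (2 / (m : ℝ)) * (1 + (1 + Real.log m) / Real.pi))
      atTop (nhds 0) := by
  refine ⟨?_, gamma_tendsto⟩
  have hn0 : (0 : ℝ) < n := by exact_mod_cast hn
  have hpi := Real.pi_pos
  rw [l2OpNorm_eq, l2OpNorm_eq]
  set N : Matrix (Fin n) (Fin n) ℂ := Matrix.of fun j l : Fin n =>
            (((((j : ℕ) : ℤ) - ((l : ℕ) : ℤ)) : ℤ) : ℂ)
              * a (((j : ℕ) : ℤ) - ((l : ℕ) : ℤ)) with hN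
  have key : (Matrix.of fun j l : Fin n =>
        ((|(((j : ℕ) : ℤ) - ((l : ℕ) : ℤ))| : ℤ) : ℂ) / (n : ℂ)
          * a (((j : ℕ) : ℤ) - ((l : ℕ) : ℤ)))
      = (1 / (n : ℂ)) • ∑ p ∈ Finset.range n, cf n p •
        (Matrix.diagonal (fun j : Fin n => zt n p ^ (j : ℕ)) * N *
          Matrix.diagonal (fun l : Fin n => (zt n p ^ (l : ℕ))⁻¹)) := by
    ext j l
    rw [Matrix.of_apply, ← repr_sign n (((j : ℕ) : ℤ) - ((l : ℕ) : ℤ))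
      (by rw [abs_lt]; constructor <;> omega)]
    rw [Matrix.smul_apply, Matrix.sum_apply, smul_eq_mul, div_eq_mul_inv, Finset.sum_mul,
      Finset.sum_mul, Finset.sum_mul, Finset.mul_sum]
    refine Finset.sum_congr rfl fun p _ => ?_
    rw [Matrix.smul_apply, Matrix.mul_diagonal, Matrix.diagonal_mul, hN, Matrix.of_apply,
      zpow_sub₀ (zt_ne n p), zpow_natCast, zpow_natCast, smul_eq_mul]
    ring
  rw [key, norm_smul]
  have hsum : ‖∑ p ∈ Finset.range n, cf n p •
        (Matrix.diagonal (fun j : Fin n => zt n p ^ (j : ℕ)) * N *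
          Matrix.diagonal (fun l : Fin n => (zt n p ^ (l : ℕ))⁻¹))‖
      ≤ (∑ p ∈ Finset.range n, ‖cf n p‖) * ‖N‖ := by
    rw [Finset.sum_mul]
    refine norm_sum_le_of_le _ fun p _ => ?_
    rw [norm_smul]
    refine mul_le_mul_of_nonneg_left (conj_norm N _ _ ?_ ?_) (norm_nonneg _)
    · intro i; simp [zt_norm]
    · intro i; simp [zt_norm]
  have hc := cf_sum n hn
  have hlast : (4 / Real.pi) * (1 + Real.log n / 2) ≤ 2 * (1 + (1 + Real.log n) / Real.pi) := by
    have h2 : 1 / Real.pi ≤ 1 := by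
      rw [div_le_one hpi]; linarith [Real.pi_gt_three]
    have e : 2 * (1 + (1 + Real.log n) / Real.pi) - (4 / Real.pi) * (1 + Real.log n / 2)
      = 2 * (1 - 1 / Real.pi) := by ring
    linarith
  have hnn : ‖(1 / (n : ℂ))‖ = 1 / (n : ℝ) := by simp
  rw [hnn]
  calc _ ≤ 1 / (n : ℝ) * ((2 * (1 + (1 + Real.log n) / Real.pi)) * ‖N‖) := by
        gcongr
        exact hsum.trans (mul_le_mul_of_nonneg_right (hc.trans hlast) (norm_nonneg _))
    _ = _ := by ring

theorem schur_estimate (n : ℕ) (hn : 1 ≤ n) (a : ℤ → ℂ) :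
    (l2OpNorm (Matrix.of fun j l : Fin n =>
        ((|(((j : ℕ) : ℤ) - ((l : ℕ) : ℤ))| : ℤ) : ℂ) / (n : ℂ)
          * a (((j : ℕ) : ℤ) - ((l : ℕ) : ℤ)))
      ≤ (2 / (n : ℝ)) * (1 + (1 + Real.log n) / Real.pi)
        * l2OpNorm (Matrix.of fun j l : Fin n =>
            (((((j : ℕ) : ℤ) - ((l : ℕ) : ℤ)) : ℤ) : ℂ)
              * a (((j : ℕ) : ℤ) - ((l : ℕ) : ℤ)))) ∧
    Tendsto (fun m : ℕ => (2 / (m : ℝ)) * (1 + (1 + Real.log m) / Real.pi))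
      atTop (nhds 0) := by
  exact schur_aux n hn a
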